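/- arXiv:2505.23614 — 2 statements merged into one kernel-verified Lean document; each statement's English description precedes it below -/
import Mathlib

section
/- Let V be a real vector space, let α_t, α_{t−1}, σ_t, σ_{t−1} > 0 satisfy σ_t/α_t > σ_{t−1}/α_{t−1}, and define λ_t = log(α_t/σ_t), λ_{t−1} = log(α_{t−1}/σ_{t−1}). For any x, s, ε ∈ V, let x′ = (α_{t−1}/α_t)·x + σ_t²·(α_{t−1}/α_t − σ_{t−1}/σ_t)·s be the DDIM denoising step applied to x, and let x″ = (α_t/α_{t−1})·x′ + α_t·√(σ_t²/α_t² − σ_{t−1}²/α_{t−1}²)·ε be the result of re-noising x′ back to level t via the forward kernel. Then x″ = x + σ_t²·(1 − e^{λ_t − λ_{t−1}})·s + σ_t·√(1 − e^{2(λ_t − λ_{t−1})})·ε. -/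
/-!
Write `η = σ / α` for the noise-to-signal ratio of a level. The exponential of a log-SNR difference
is the inverse ratio of the corresponding `η`s, `e^{λ_t − λ_{t−1}} = η_{t−1} / η_t`. The drift
coefficient is affine in this ratio, and the re-noising standard deviation
`α_t √(η_t² − η_{t−1}²)` becomes `σ_t √(1 − (η_{t−1} / η_t)²)` after pulling `η_t` out of the root.
-/

theorem exp_log_div_sub_log_div {α σ α' σ' : ℝ} (hα : 0 < α) (hσ : 0 < σ) (hα' : 0 < α')
    (hσ' : 0 < σ') :
    Real.exp (Real.log (α / σ) - Real.log (α' / σ')) = (σ' / α') / (σ / α) := by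
  rw [Real.exp_sub, Real.exp_log (div_pos hα hσ), Real.exp_log (div_pos hα' hσ'),
    ← inv_div σ α, ← inv_div σ' α', inv_div_inv]

theorem div_mul_div_sub_div {K : Type*} [Field K] {α α' : K} (hα : α ≠ 0) (hα' : α' ≠ 0)
    (σ σ' : K) :
    α / α' * (α' / α - σ' / σ) = 1 - (σ' / α') / (σ / α) := by
  field_simp

theorem sqrt_sq_sub_sq_eq_mul_sqrt_one_sub_div_sq {η : ℝ} (hη : 0 < η) (η' : ℝ) :
    √(η ^ 2 - η' ^ 2) = η * √(1 - (η' / η) ^ 2) := by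
  have hfactor : η ^ 2 - η' ^ 2 = η ^ 2 * (1 - (η' / η) ^ 2) := by field_simp
  rw [hfactor, Real.sqrt_mul (sq_nonneg η), Real.sqrt_sq hη.le]

theorem mul_sqrt_div_sq_sub_div_sq {α σ : ℝ} (hα : 0 < α) (hσ : 0 < σ) (α' σ' : ℝ) :
    α * √(σ ^ 2 / α ^ 2 - σ' ^ 2 / α' ^ 2) = σ * √(1 - ((σ' / α') / (σ / α)) ^ 2) := by
  rw [← div_pow, ← div_pow, sqrt_sq_sub_sq_eq_mul_sqrt_one_sub_div_sq (div_pos hσ hα),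
    ← mul_assoc, mul_div_cancel₀ σ hα.ne']

/-- A DDIM denoising step followed by re-noising through the forward kernel is the
recurrence `x ↦ x + σ_t²(1 − e^{λ_t − λ_{t−1}}) s + σ_t √(1 − e^{2(λ_t − λ_{t−1})}) ε`,
where `λ_t = log(α_t/σ_t)` is the log-SNR. -/
theorem stmt_3
    {V : Type*} [AddCommGroup V] [Module ℝ V]
    (αt αt₁ σt σt₁ : ℝ) (hαt : 0 < αt) (hαt₁ : 0 < αt₁) (hσt : 0 < σt) (hσt₁ : 0 < σt₁)
    (hSNR : σt₁ / αt₁ < σt / αt)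
    (lamt lamt₁ : ℝ) (hlamt : lamt = Real.log (αt / σt)) (hlamt₁ : lamt₁ = Real.log (αt₁ / σt₁))
    (x s ε x' x'' : V)
    (hx' : x' = (αt₁ / αt) • x + (σt ^ 2 * (αt₁ / αt - σt₁ / σt)) • s)
    (hx'' : x'' = (αt / αt₁) • x'
        + (αt * Real.sqrt (σt ^ 2 / αt ^ 2 - σt₁ ^ 2 / αt₁ ^ 2)) • ε) :
    x'' = x + (σt ^ 2 * (1 - Real.exp (lamt - lamt₁))) • s
        + (σt * Real.sqrt (1 - Real.exp (2 * (lamt - lamt₁)))) • ε := by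
  have hratio : Real.exp (lamt - lamt₁) = (σt₁ / αt₁) / (σt / αt) := by
    rw [hlamt, hlamt₁, exp_log_div_sub_log_div hαt hσt hαt₁ hσt₁]
  have hratio_sq : Real.exp (2 * (lamt - lamt₁)) = ((σt₁ / αt₁) / (σt / αt)) ^ 2 := by
    rw [← hratio, ← Real.exp_nat_mul, Nat.cast_ofNat]
  have hsignal : αt / αt₁ * (αt₁ / αt) = 1 := by
    rw [div_mul_div_cancel₀ hαt₁.ne', div_self hαt.ne']
  have hdrift : αt / αt₁ * (σt ^ 2 * (αt₁ / αt - σt₁ / σt))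
      = σt ^ 2 * (1 - Real.exp (lamt - lamt₁)) := by
    rw [mul_left_comm, div_mul_div_sub_div hαt.ne' hαt₁.ne', hratio]
  have hnoise : αt * √(σt ^ 2 / αt ^ 2 - σt₁ ^ 2 / αt₁ ^ 2)
      = σt * √(1 - Real.exp (2 * (lamt - lamt₁))) := by
    rw [mul_sqrt_div_sq_sub_div_sq hαt hσt, hratio_sq]
  rw [hx'', hx', smul_add, smul_smul, smul_smul, hsignal, one_smul, hdrift, hnoise]
end

section
/- For σ > 0 and h < 0, the DDIM recurrence coefficients a(h) = σ²(1 − e^{h}) and b(h) = σ·√(1 − e^{2h}) satisfy b(h)² = (1 + e^{h})·a(h); consequently the ratio b(h)²/(2·a(h)) = (1 + e^{h})/2 tends to 1 as h → 0 from the left. That is, in the continuous limit of vanishing log-SNR increments, the recurrence step x + a·s + b·ε matches the unadjusted Langevin step x + η·s + √(2η)·ε with step size η = a. -/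
open Real Filter

section DDIM

open scoped Topology

/-- The coefficient `σ² (1 - e^h)` of the score in a DDIM denoise–renoise recurrence step at noise
level `σ`, where `h` is the log-SNR increment `λ_t - λ_{t-1}`. -/
noncomputable def ddimScoreCoeff (σ h : ℝ) : ℝ :=
  σ ^ 2 * (1 - exp h)

/-- The coefficient `σ √(1 - e^{2h})` of the Gaussian noise in a DDIM denoise–renoise recurrence
step at noise level `σ`, where `h` is the log-SNR increment `λ_t - λ_{t-1}`. It represents the
paper's coefficient only for `h ≤ 0`; for `h > 0` the square root takes its junk value `0`. -/
noncomputable def ddimNoiseCoeff (σ h : ℝ) : ℝ :=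
  σ * √(1 - exp (2 * h))

variable {σ h : ℝ}

theorem one_sub_exp_two_mul (x : ℝ) : 1 - exp (2 * x) = (1 + exp x) * (1 - exp x) := by
  rw [two_mul, exp_add]
  ring

theorem ddimNoiseCoeff_sq (σ : ℝ) (hh : h ≤ 0) :
    ddimNoiseCoeff σ h ^ 2 = (1 + exp h) * ddimScoreCoeff σ h := by
  have h_nonneg : 0 ≤ 1 - exp (2 * h) :=
    sub_nonneg.mpr (exp_le_one_iff.mpr (by linarith))
  calc ddimNoiseCoeff σ h ^ 2
      = σ ^ 2 * (1 - exp (2 * h)) := by rw [ddimNoiseCoeff, mul_pow, sq_sqrt h_nonneg]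
    _ = σ ^ 2 * ((1 + exp h) * (1 - exp h)) := by rw [one_sub_exp_two_mul]
    _ = (1 + exp h) * ddimScoreCoeff σ h := mul_left_comm ..

theorem ddimScoreCoeff_ne_zero (hσ : σ ≠ 0) (hh : h ≠ 0) : ddimScoreCoeff σ h ≠ 0 :=
  mul_ne_zero (pow_ne_zero 2 hσ) (sub_ne_zero.mpr (Ne.symm (mt (exp_eq_one_iff h).mp hh)))

theorem ddimNoiseCoeff_sq_div_two_mul_ddimScoreCoeff (hσ : σ ≠ 0) (hh : h < 0) :
    ddimNoiseCoeff σ h ^ 2 / (2 * ddimScoreCoeff σ h) = (1 + exp h) / 2 := by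
  rw [ddimNoiseCoeff_sq σ hh.le, mul_div_mul_right _ _ (ddimScoreCoeff_ne_zero hσ hh.ne)]

theorem tendsto_one_add_exp_div_two : Tendsto (fun x : ℝ => (1 + exp x) / 2) (𝓝 0) (𝓝 1) := by
  have h_cont : Continuous fun x : ℝ => (1 + exp x) / 2 := by fun_prop
  exact h_cont.tendsto' 0 1 (by norm_num)

theorem tendsto_ddimNoiseCoeff_sq_div_two_mul_ddimScoreCoeff (hσ : σ ≠ 0) :
    Tendsto (fun h => ddimNoiseCoeff σ h ^ 2 / (2 * ddimScoreCoeff σ h)) (𝓝[<] 0) (𝓝 1) := by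
  refine (tendsto_one_add_exp_div_two.mono_left nhdsWithin_le_nhds).congr' ?_
  filter_upwards [self_mem_nhdsWithin] with h hh
  exact (ddimNoiseCoeff_sq_div_two_mul_ddimScoreCoeff hσ hh).symm

end DDIM

/-- For `σ > 0` and `h < 0`, the DDIM recurrence coefficients `a(h) = σ²(1 − e^h)` and
`b(h) = σ √(1 − e^{2h})` satisfy `b(h)² = (1 + e^h) a(h)`; consequently the ratio
`b(h)²/(2 a(h)) = (1 + e^h)/2` tends to `1` as `h → 0⁻`, so the recurrence step matches the
unadjusted Langevin step with step size `η = a`. -/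
theorem stmt_4 (σ : ℝ) (hσ : 0 < σ)
    (a b : ℝ → ℝ)
    (ha : ∀ h, a h = σ ^ 2 * (1 - Real.exp h))
    (hb : ∀ h, b h = σ * Real.sqrt (1 - Real.exp (2 * h))) :
    (∀ h < 0, b h ^ 2 = (1 + Real.exp h) * a h) ∧
    (∀ h < 0, b h ^ 2 / (2 * a h) = (1 + Real.exp h) / 2) ∧
    Tendsto (fun h => b h ^ 2 / (2 * a h)) (nhdsWithin 0 (Set.Iio 0)) (nhds 1) := by
  obtain rfl : a = ddimScoreCoeff σ := funext ha
  obtain rfl : b = ddimNoiseCoeff σ := funext hb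
  exact ⟨fun _ hh => ddimNoiseCoeff_sq σ hh.le,
    fun _ hh => ddimNoiseCoeff_sq_div_two_mul_ddimScoreCoeff hσ.ne' hh,
    tendsto_ddimNoiseCoeff_sq_div_two_mul_ddimScoreCoeff hσ.ne'⟩
end
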